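/- Let H be a Polish space with metric ρ and let ρ̃ be a possibly different distance on H. Define D_{ρ̃} = {(u,v) ∈ H^ℕ × H^ℕ : ρ̃(u_n, v_n) → 0} and the class 𝒢_{ρ̃} of bounded continuous functions on H that are Lipschitz with respect to ρ̃. Suppose 𝒢_{ρ̃} determines measures on (H, ρ) and D_{ρ̃} is measurable. If H₀ ⊆ H is measurable and for each u₀, v₀ ∈ H₀ there is a probability measure Γ on H^ℕ × H^ℕ whose marginals are absolutely continuous with respect to δ_{u₀}P^ℕ and δ_{v₀}P^ℕ respectively, and with Γ(D_{ρ̃}) > 0, then there is at most one ergodic invariant measure μ for P with μ(H₀) > 0. -/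

import Mathlib

open MeasureTheory ProbabilityTheory Filter

/-- `μ` is an invariant probability measure for the Markov kernel `P`. -/
def IsInvariantMeasure {H : Type*} [MeasurableSpace H]
    (P : ProbabilityTheory.Kernel H H) (μ : Measure H) : Prop :=
  μ.bind (fun u => P u) = μ

/-- `μ` is an ergodic invariant measure for `P`. -/
def IsErgodicMeasure {H : Type*} [MeasurableSpace H]
    (P : ProbabilityTheory.Kernel H H) (μ : Measure H) : Prop :=
  IsInvariantMeasure P μ ∧
    ∀ A : Set H, MeasurableSet A →
      (∀ᵐ u ∂μ, P u A = A.indicator (fun _ => (1 : ENNReal)) u) →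
      μ A = 0 ∨ μ A = 1

/-! By ergodicity `μ ≪ μ - ν` and `ν ≪ ν - μ` when `μ ≠ ν`, so `μ` and `ν` are mutually singular.
Stone–Weierstrass on compact sets carrying most of `μ` and of `ν` then gives functions `φ k` in
the algebra attached to `D` with `μ {φ k < 2 / 3} + ν {1 / 3 < φ k} → 0`. By invariance and
Fatou's lemma, for `μ ⊗ ν`-almost every `(u, v)` the time-`n` laws of the chain started at `u` and
`v` satisfy the same smallness for some `k` along infinitely many `n`. A coupling charging `D`
forbids this: on `D` the values of `φ k` merge, so with probability bounded away from `0`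
either the first trajectory has `φ k < 2 / 3` or the second has `1 / 3 < φ k`, at all late times,
and absolute continuity of the marginals transfers this lower bound to the path laws, uniformly
in `k`. -/

open scoped ENNReal Topology BoundedContinuousFunction
open BoundedContinuousFunction (toContinuousMapₐ)

section Measure

variable {α β : Type*} [MeasurableSpace α] [MeasurableSpace β]

lemma aemeasurable_of_bind_ne_zero {m : Measure α} {f : α → Measure β} (h : m.bind f ≠ 0) :
    AEMeasurable f m := by
  contrapose! h
  rw [Measure.bind, Measure.map_of_not_aemeasurable h, Measure.join_zero]

lemma exists_pos_forall_measure_lt_of_absolutelyContinuous {μ ν : Measure α} [IsFiniteMeasure μ]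
    [IsFiniteMeasure ν] (hμν : μ ≪ ν) {ε : ℝ≥0∞} (hε : ε ≠ 0) :
    ∃ δ > 0, ∀ s, ν s < δ → μ s < ε := by
  obtain ⟨δ, hδ, hlt⟩ :=
    exists_pos_setLIntegral_lt_of_measure_lt (Measure.lintegral_rnDeriv_lt_top μ ν).ne hε
  refine ⟨δ, hδ, fun s hs => ?_⟩
  rw [← Measure.withDensity_rnDeriv_eq μ ν hμν, withDensity_apply']
  exact hlt s hs

lemma eventually_lt_measure_of_forall_eventually_mem {m : Measure α} {s : Set α} {t : ℕ → Set α}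
    (hst : ∀ x ∈ s, ∀ᶠ n in atTop, x ∈ t n) {c : ℝ≥0∞} (hc : c < m s) :
    ∀ᶠ n in atTop, c < m (t n) := by
  have hmono : Monotone fun N => ⋂ n ≥ N, t n := fun M N hMN =>
    Set.biInter_subset_biInter_left fun _ hn => hMN.trans hn
  have hsub : s ⊆ ⋃ N, ⋂ n ≥ N, t n := fun x hx => by
    simpa only [Set.mem_iUnion, Set.mem_iInter, eventually_atTop] using hst x hx
  have hlt : c < ⨆ N, m (⋂ n ≥ N, t n) := by
    rw [← hmono.measure_iUnion]
    exact hc.trans_le (measure_mono hsub)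
  obtain ⟨N, hN⟩ := lt_iSup_iff.1 hlt
  filter_upwards [eventually_ge_atTop N] with n hn
  exact hN.trans_le (measure_mono (Set.biInter_subset_of_mem hn))

lemma ae_iInf_liminf_eq_zero {m : Measure α} {f : ℕ → ℕ → α → ℝ≥0∞}
    (hf : ∀ k n, Measurable (f k n)) {ε : ℕ → ℝ≥0∞} (hε : Tendsto ε atTop (𝓝 0))
    (hle : ∀ k n, ∫⁻ x, f k n x ∂m ≤ ε k) :
    ∀ᵐ x ∂m, ⨅ k, liminf (fun n => f k n x) atTop = 0 := by
  have hmeas : Measurable fun x => ⨅ k, liminf (fun n => f k n x) atTop :=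
    .iInf fun k => .liminf (hf k)
  refine (lintegral_eq_zero_iff hmeas).1 (le_zero_iff.1 (ge_of_tendsto' hε fun k => ?_))
  calc ∫⁻ x, ⨅ k, liminf (fun n => f k n x) atTop ∂m
      ≤ ∫⁻ x, liminf (fun n => f k n x) atTop ∂m := lintegral_mono fun x => iInf_le _ k
    _ ≤ liminf (fun n => ∫⁻ x, f k n x ∂m) atTop := lintegral_liminf_le (hf k)
    _ ≤ ε k := liminf_le_of_le (by isBoundedDefault) fun _ h =>
        let ⟨n, hn⟩ := h.exists; hn.trans (hle k n)

end Measure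

section Ergodic

variable {H : Type*} [MeasurableSpace H] {P : Kernel H H} {μ ν : Measure H}

lemma invariant_pow (hμ : P.Invariant μ) (n : ℕ) : (P ^ n).Invariant μ := by
  induction n with
  | zero => exact Measure.id_comp
  | succ n ih =>
    rw [pow_succ]
    exact ih.comp hμ

lemma lintegral_prod_kernel_add_kernel [IsProbabilityMeasure μ] [IsProbabilityMeasure ν]
    (hμ : P.Invariant μ) (hν : P.Invariant ν) {s t : Set H} (hs : MeasurableSet s)
    (ht : MeasurableSet t) : ∫⁻ z, (P z.1 s + P z.2 t) ∂(μ.prod ν) = μ s + ν t := by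
  have hPs := P.measurable_coe hs
  have hPt := P.measurable_coe ht
  rw [lintegral_add_left (by fun_prop), measurePreserving_fst.lintegral_comp hPs,
    measurePreserving_snd.lintegral_comp hPt, ← Measure.bind_apply hs P.aemeasurable,
    ← Measure.bind_apply ht P.aemeasurable, hμ.def, hν.def]

lemma exists_mem_iInf_liminf_eq_zero [IsProbabilityMeasure μ] [IsProbabilityMeasure ν]
    (hμ : P.Invariant μ) (hν : P.Invariant ν) {S T : ℕ → Set H} (hS : ∀ k, MeasurableSet (S k))
    (hT : ∀ k, MeasurableSet (T k)) {ε : ℕ → ℝ≥0∞} (hε : Tendsto ε atTop (𝓝 0))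
    (hle : ∀ k, μ (S k) + ν (T k) ≤ ε k) {U V : Set H} (hU : 0 < μ U) (hV : 0 < ν V) :
    ∃ u ∈ U, ∃ v ∈ V,
      ⨅ k, liminf (fun n => (P ^ (n + 1)) u (S k) + (P ^ (n + 1)) v (T k)) atTop = 0 := by
  have hae := ae_iInf_liminf_eq_zero (m := μ.prod ν)
    (f := fun k n z => (P ^ (n + 1)) z.1 (S k) + (P ^ (n + 1)) z.2 (T k))
    (fun k n => (((P ^ (n + 1)).measurable_coe (hS k)).comp measurable_fst).add
      (((P ^ (n + 1)).measurable_coe (hT k)).comp measurable_snd)) hε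
    (fun k n => (lintegral_prod_kernel_add_kernel (invariant_pow hμ _) (invariant_pow hν _)
      (hS k) (hT k)).trans_le (hle k))
  have hpos : (μ.prod ν) (U ×ˢ V) ≠ 0 := by
    rw [Measure.prod_prod]
    exact mul_ne_zero hU.ne' hV.ne'
  obtain ⟨⟨u, v⟩, ⟨hu, hv⟩, hzero⟩ :=
    Measure.exists_mem_of_measure_ne_zero_of_ae hpos (ae_restrict_of_ae hae)
  exact ⟨u, hu, v, hv, hzero⟩

lemma ae_kernel_apply_eq_indicator_of_absorbing [IsFiniteMeasure μ] (hμ : P.Invariant μ)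
    {B : Set H} (hB : MeasurableSet B) (habs : ∀ᵐ u ∂μ, u ∈ B → P u B = 1) :
    ∀ᵐ u ∂μ, P u B = B.indicator (fun _ => 1) u := by
  have hle : B.indicator (fun _ => 1) ≤ᵐ[μ] fun u => P u B := by
    filter_upwards [habs] with u hu
    by_cases huB : u ∈ B
    · simp only [Set.indicator_of_mem huB, hu huB, le_refl]
    · simp only [Set.indicator_of_notMem huB, zero_le]
  have hB_int : ∫⁻ u, B.indicator (fun _ => 1) u ∂μ = μ B := lintegral_indicator_one hB
  have hP_int : ∫⁻ u, P u B ∂μ = μ B := by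
    rw [← Measure.bind_apply hB P.aemeasurable, hμ.def]
  exact (ae_eq_of_ae_le_of_lintegral_le hle (hB_int ▸ measure_ne_top μ B)
    (P.measurable_coe hB).aemeasurable (hP_int.trans hB_int.symm).le).symm

variable [IsMarkovKernel P]

lemma invariant_sub [IsFiniteMeasure μ] [IsFiniteMeasure ν] (hμ : P.Invariant μ)
    (hν : P.Invariant ν) : P.Invariant (μ - ν) := by
  refine (Measure.eq_of_le_of_measure_univ_eq (Measure.sub_le_of_le_add ?_) ?_).symm
  · refine Measure.le_iff.2 fun s hs => ?_
    calc μ s = ∫⁻ u, P u s ∂μ := by rw [← Measure.bind_apply hs P.aemeasurable, hμ.def]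
      _ ≤ ∫⁻ u, P u s ∂(μ - ν + ν) := lintegral_mono' (Measure.sub_le_iff_le_add.1 le_rfl) le_rfl
      _ = (P ∘ₘ (μ - ν) + ν) s := by
        rw [lintegral_add_measure, ← Measure.bind_apply hs P.aemeasurable,
          ← Measure.bind_apply hs P.aemeasurable, hν.def, Measure.add_apply]
  · rw [Measure.bind_apply .univ P.aemeasurable]
    simp

namespace IsErgodicMeasure

lemma absolutelyContinuous_of_invariant [IsProbabilityMeasure μ] [IsFiniteMeasure ν]
    (hμ : IsErgodicMeasure P μ) (hν : P.Invariant ν) (hac : ν ≪ μ) (hν0 : ν ≠ 0) : μ ≪ ν := by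
  set f := ν.rnDeriv μ
  have hfm : Measurable f := Measure.measurable_rnDeriv ν μ
  have hd : μ.withDensity f = ν := Measure.withDensity_rnDeriv_eq ν μ hac
  have hB : MeasurableSet {u | f u ≠ 0} := (hfm (measurableSet_singleton 0)).compl
  have habs : ∀ᵐ u ∂ν, ∀ᵐ v ∂P u, f v ≠ 0 := by
    apply Measure.ae_ae_of_ae_comp
    rw [hν.def, ← hd, ae_withDensity_iff hfm]
    exact ae_of_all _ fun _ => id
  rw [← hd, ae_withDensity_iff hfm] at habs
  have hind := ae_kernel_apply_eq_indicator_of_absorbing hμ.1 hB <| by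
    filter_upwards [habs] with u hu hfu
    exact (mem_ae_iff_prob_eq_one hB).1 (hu hfu)
  rcases hμ.2 _ hB hind with hzero | hone
  · refine absurd ?_ hν0
    rw [← hd, withDensity_eq_zero_iff hfm.aemeasurable]
    exact measure_eq_zero_iff_ae_notMem.1 hzero |>.mono fun _ h => not_not.1 h
  · rw [← hd]
    exact withDensity_absolutelyContinuous' hfm.aemeasurable ((mem_ae_iff_prob_eq_one hB).2 hone)

lemma absolutelyContinuous_sub [IsProbabilityMeasure μ] [IsProbabilityMeasure ν]
    (hμ : IsErgodicMeasure P μ) (hν : P.Invariant ν) (hne : μ ≠ ν) : μ ≪ μ - ν := by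
  refine hμ.absolutelyContinuous_of_invariant (invariant_sub hμ.1 hν)
    (Measure.absolutelyContinuous_of_le Measure.sub_le) fun h0 => hne ?_
  have hle : μ ≤ 0 + ν := Measure.sub_le_iff_le_add.1 h0.le
  exact Measure.eq_of_le_of_isProbabilityMeasure (by simpa only [zero_add] using hle)

lemma mutuallySingular [IsProbabilityMeasure μ] [IsProbabilityMeasure ν]
    (hμ : IsErgodicMeasure P μ) (hν : IsErgodicMeasure P ν) (hne : μ ≠ ν) : μ ⟂ₘ ν :=
  Measure.mutually_singular_measure_sub.mono_ac (hμ.absolutelyContinuous_sub hν.1 hne)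
    (hν.absolutelyContinuous_sub hμ.1 hne.symm)

end IsErgodicMeasure

end Ergodic

lemma map_eval_pathLaw_eq_pow {H : Type*} [MeasurableSpace H] {P : Kernel H H}
    {pathLaw : H → Measure (ℕ → H)} (hprob : ∀ u, IsProbabilityMeasure (pathLaw u))
    (hfirst : ∀ u, (pathLaw u).map (fun ω => ω 0) = P u)
    (hMarkov : ∀ u, (pathLaw u).map (fun ω k => ω (k + 1)) = (P u).bind pathLaw) (n : ℕ) (u : H) :
    (pathLaw u).map (fun ω => ω n) = (P ^ (n + 1)) u := by
  have hshift : Measurable fun (ω : ℕ → H) (k : ℕ) => ω (k + 1) := by fun_prop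
  have haem : ∀ u, AEMeasurable pathLaw (P u) := fun u =>
    aemeasurable_of_bind_ne_zero <| by
      rw [← hMarkov u]
      exact (Measure.isProbabilityMeasure_map hshift.aemeasurable).ne_zero
  induction n generalizing u with
  | zero => rw [hfirst, zero_add, pow_one]
  | succ n ih =>
    have heval : Measurable fun ω : ℕ → H => ω n := measurable_pi_apply n
    ext s hs
    calc (pathLaw u).map (fun ω => ω (n + 1)) s
        = ((pathLaw u).map (fun ω k => ω (k + 1))).map (fun ω => ω n) s := by
          rw [Measure.map_map heval hshift]; rfl
      _ = ∫⁻ v, pathLaw v ((fun ω => ω n) ⁻¹' s) ∂P u := by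
          rw [hMarkov, Measure.map_apply heval hs, Measure.bind_apply (heval hs) (haem u)]
      _ = ∫⁻ v, (P ^ (n + 1)) v s ∂P u := by
          simp only [← ih, Measure.map_apply heval hs]
      _ = (P ^ (n + 1 + 1)) u s := by
          rw [pow_succ P (n + 1)]
          exact (Kernel.comp_apply' _ _ _ hs).symm

section Algebra

variable {X : Type*} [TopologicalSpace X]

/-- The bounded continuous functions whose values along the two coordinates of every pair of
sequences in `D` merge asymptotically. It plays the role of the class `𝒢_{ρ̃}`, which it contains
when `D = D_{ρ̃}`. -/
def asymptoticAlgebra (D : Set ((ℕ → X) × (ℕ → X))) :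
    Subalgebra ℝ (X →ᵇ ℝ) where
  carrier := {φ | ∀ p ∈ D, Tendsto (fun n => φ (p.1 n) - φ (p.2 n)) atTop (𝓝 0)}
  algebraMap_mem' c p _ := by simp
  add_mem' {φ ψ} hφ hψ p hp := by
    simpa [add_sub_add_comm] using (hφ p hp).add (hψ p hp)
  mul_mem' {φ ψ} hφ hψ p hp := by
    have hbdd (χ : X →ᵇ ℝ) (x : ℕ → X) : IsBoundedUnder (· ≤ ·) atTop (norm ∘ fun n => χ (x n)) :=
      isBoundedUnder_of ⟨‖χ‖, fun n => χ.norm_coe_le_norm (x n)⟩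
    have hlim := (isBoundedUnder_le_mul_tendsto_zero (hbdd φ p.1) (hψ p hp)).add
      ((hφ p hp).zero_mul_isBoundedUnder_le (hbdd ψ p.2))
    rw [add_zero] at hlim
    exact hlim.congr fun n => by simp only [BoundedContinuousFunction.coe_mul, Pi.mul_apply]; ring

lemma mem_asymptoticAlgebra_of_lipschitz {ρ : X → X → ℝ} {φ : X →ᵇ ℝ} {L : ℝ}
    (hφ : ∀ u v, |φ u - φ v| ≤ L * ρ u v) :
    φ ∈ asymptoticAlgebra {p | Tendsto (fun n => ρ (p.1 n) (p.2 n)) atTop (𝓝 0)} := fun p hp =>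
  squeeze_zero_norm (fun n => hφ (p.1 n) (p.2 n)) (by simpa only [mul_zero] using hp.const_mul L)

variable {A : Subalgebra ℝ (X →ᵇ ℝ)}

lemma separatesPoints_of_forall_integral_eq [MeasurableSpace X] [OpensMeasurableSpace X]
    [MeasurableSpace.SeparatesPoints X]
    (hA : ∀ μ ν : Measure X, IsProbabilityMeasure μ → IsProbabilityMeasure ν →
      (∀ φ ∈ A, ∫ x, φ x ∂μ = ∫ x, φ x ∂ν) → μ = ν) :
    (A.map (toContinuousMapₐ ℝ)).SeparatesPoints := by
  intro x y hxy
  by_contra hnone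
  refine hxy (dirac_eq_dirac_iff.1 (hA _ _ inferInstance inferInstance fun φ hφ => ?_))
  have hφm := φ.continuous.stronglyMeasurable
  rw [integral_dirac' _ _ hφm, integral_dirac' _ _ hφm]
  by_contra hne
  exact hnone ⟨φ, ⟨_, ⟨φ, hφ, rfl⟩, rfl⟩, hne⟩

lemma exists_mem_subalgebra_of_disjoint_isCompact [T4Space X]
    (hA : (A.map (toContinuousMapₐ ℝ)).SeparatesPoints) {K L : Set X}
    (hK : IsCompact K) (hL : IsCompact L) (hKL : Disjoint K L) :
    ∃ φ ∈ A, (∀ x ∈ K, 2 / 3 < φ x) ∧ ∀ x ∈ L, φ x < 1 / 3 := by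
  obtain ⟨f, hfL, hfK, -⟩ :=
    exists_continuous_zero_one_of_isClosed hL.isClosed hK.isClosed hKL.symm
  obtain ⟨_, ⟨φ, hφA, rfl⟩, happrox⟩ :=
    ContinuousMap.exists_mem_subalgebra_near_continuous_of_isCompact_of_separatesPoints hA f
      (hK.union hL) (by norm_num : (0 : ℝ) < 1 / 3)
  have hφf : ∀ x ∈ K ∪ L, |φ x - f x| < 1 / 3 := happrox
  refine ⟨φ, hφA, fun x hx => ?_, fun x hx => ?_⟩
  · have hf1 : f x = 1 := hfK hx
    linarith [(abs_lt.1 (hφf x (Or.inl hx))).1]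
  · have hf0 : f x = 0 := hfL hx
    linarith [(abs_lt.1 (hφf x (Or.inr hx))).2]

lemma exists_mem_subalgebra_measure_add_measure_le [PolishSpace X] [MeasurableSpace X]
    [BorelSpace X] (hA : (A.map (toContinuousMapₐ ℝ)).SeparatesPoints)
    {μ ν : Measure X} [IsFiniteMeasure μ] [IsFiniteMeasure ν] (hμν : μ ⟂ₘ ν) {ε : ℝ≥0∞}
    (hε : ε ≠ 0) :
    ∃ φ ∈ A, μ {x | φ x < 2 / 3} + ν {x | 1 / 3 < φ x} ≤ ε := by
  obtain ⟨s, hs, hμs, hνs⟩ := hμν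
  have hε2 : ε / 2 ≠ 0 := (ENNReal.half_pos hε).ne'
  obtain ⟨K, hKs, hK, hμK⟩ := hs.compl.exists_isCompact_sdiff_lt (measure_ne_top μ sᶜ) hε2
  obtain ⟨L, hLs, hL, hνL⟩ := hs.exists_isCompact_sdiff_lt (measure_ne_top ν s) hε2
  obtain ⟨φ, hφA, hφK, hφL⟩ := exists_mem_subalgebra_of_disjoint_isCompact hA hK hL
    (disjoint_compl_left.mono hKs hLs)
  refine ⟨φ, hφA, ?_⟩
  have hμ_sub : {x | φ x < 2 / 3} ⊆ s ∪ sᶜ \ K := fun x hx =>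
    (em (x ∈ s)).imp_right fun hxs => ⟨hxs, fun hxK => lt_asymm hx (hφK x hxK)⟩
  have hν_sub : {x | 1 / 3 < φ x} ⊆ sᶜ ∪ s \ L := fun x hx =>
    (em (x ∈ s)).symm.imp_right fun hxs => ⟨hxs, fun hxL => lt_asymm hx (hφL x hxL)⟩
  calc μ {x | φ x < 2 / 3} + ν {x | 1 / 3 < φ x}
      ≤ μ (s ∪ sᶜ \ K) + ν (sᶜ ∪ s \ L) := by gcongr
    _ ≤ (μ s + μ (sᶜ \ K)) + (ν sᶜ + ν (s \ L)) := by gcongr <;> exact measure_union_le _ _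
    _ ≤ ε / 2 + ε / 2 := by
      rw [hμs, hνs, zero_add, zero_add]
      gcongr
    _ = ε := ENNReal.add_halves ε

end Algebra

lemma exists_pos_eventually_le_of_coupling {X : Type*} [MeasurableSpace X]
    {D : Set ((ℕ → X) × (ℕ → X))} {p q : Measure (ℕ → X)} [IsFiniteMeasure p] [IsFiniteMeasure q]
    {Γ : Measure ((ℕ → X) × (ℕ → X))} [IsFiniteMeasure Γ] (hp : Γ.map Prod.fst ≪ p)
    (hq : Γ.map Prod.snd ≪ q) (hD : 0 < Γ D) :
    ∃ δ > 0, ∀ φ : X → ℝ, (∀ z ∈ D, Tendsto (fun n => φ (z.1 n) - φ (z.2 n)) atTop (𝓝 0)) →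
      ∀ a b, a < b → ∀ᶠ n in atTop, δ ≤ p {ω | φ (ω n) < b} + q {ω | a < φ (ω n)} := by
  have hhalf : Γ D / 2 ≠ 0 := (ENNReal.half_pos hD.ne').ne'
  have hquarter : Γ D / 2 / 2 ≠ 0 := (ENNReal.half_pos hhalf).ne'
  obtain ⟨δ₁, hδ₁, hp⟩ := exists_pos_forall_measure_lt_of_absolutelyContinuous hp hquarter
  obtain ⟨δ₂, hδ₂, hq⟩ := exists_pos_forall_measure_lt_of_absolutelyContinuous hq hquarter
  refine ⟨min δ₁ δ₂, lt_min hδ₁ hδ₂, fun φ hφ a b hab => ?_⟩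
  have hclose : ∀ᶠ n in atTop, Γ D / 2 < Γ {z | φ (z.1 n) - φ (z.2 n) < b - a} :=
    eventually_lt_measure_of_forall_eventually_mem
      (fun z hz => (hφ z hz).eventually_lt_const (sub_pos.2 hab))
      (ENNReal.half_lt_self hD.ne' (measure_ne_top Γ D))
  filter_upwards [hclose] with n hn
  by_contra! hlt
  refine hn.not_ge ?_
  have hsub : {z : (ℕ → X) × (ℕ → X) | φ (z.1 n) - φ (z.2 n) < b - a} ⊆
      Prod.fst ⁻¹' {ω | φ (ω n) < b} ∪ Prod.snd ⁻¹' {ω | a < φ (ω n)} := fun z hz => by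
    by_contra! h
    simp only [Set.mem_union, Set.mem_preimage, Set.mem_ofPred_eq, not_or, not_lt] at h hz
    linarith
  calc Γ {z | φ (z.1 n) - φ (z.2 n) < b - a}
      ≤ Γ (Prod.fst ⁻¹' {ω | φ (ω n) < b}) + Γ (Prod.snd ⁻¹' {ω | a < φ (ω n)}) :=
        (measure_mono hsub).trans (measure_union_le _ _)
    _ ≤ Γ.map Prod.fst {ω | φ (ω n) < b} + Γ.map Prod.snd {ω | a < φ (ω n)} :=
        add_le_add (Measure.le_map_apply measurable_fst.aemeasurable _)
          (Measure.le_map_apply measurable_snd.aemeasurable _)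
    _ ≤ Γ D / 2 / 2 + Γ D / 2 / 2 :=
        add_le_add (hp _ (le_self_add.trans_lt (hlt.trans_le (min_le_left _ _)))).le
          (hq _ (le_add_self.trans_lt (hlt.trans_le (min_le_right _ _)))).le
    _ = Γ D / 2 := ENNReal.add_halves _

theorem unique_ergodic_of_asymptotic_coupling_dist_general
    {H : Type*} [TopologicalSpace H] [PolishSpace H] [MeasurableSpace H] [BorelSpace H]
    {P : Kernel H H} [IsMarkovKernel P] {pathLaw : H → Measure (ℕ → H)}
    (hpathProb : ∀ u, IsProbabilityMeasure (pathLaw u))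
    (hpathFirst : ∀ u, (pathLaw u).map (fun ω => ω 0) = P u)
    (hpathMarkov : ∀ u, (pathLaw u).map (fun ω k => ω (k + 1)) = (P u).bind pathLaw)
    {D : Set ((ℕ → H) × (ℕ → H))}
    (hsep : ((asymptoticAlgebra D).map (toContinuousMapₐ ℝ)).SeparatesPoints)
    {H₀ : Set H}
    (hcouple : ∀ u₀ ∈ H₀, ∀ v₀ ∈ H₀, ∃ Γ : Measure ((ℕ → H) × (ℕ → H)), IsFiniteMeasure Γ ∧
      Γ.map Prod.fst ≪ pathLaw u₀ ∧ Γ.map Prod.snd ≪ pathLaw v₀ ∧ 0 < Γ D)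
    {μ ν : Measure H} [IsProbabilityMeasure μ] [IsProbabilityMeasure ν]
    (hμ : IsErgodicMeasure P μ) (hν : IsErgodicMeasure P ν) (hμ₀ : 0 < μ H₀) (hν₀ : 0 < ν H₀) :
    μ = ν := by
  by_contra hne
  choose φ hφ hle using fun k : ℕ => exists_mem_subalgebra_measure_add_measure_le hsep
    (hμ.mutuallySingular hν hne) (ENNReal.inv_ne_zero.2 (ENNReal.natCast_ne_top k))
  have hS (k : ℕ) : MeasurableSet {x | φ k x < 2 / 3} :=
    measurableSet_lt (φ k).continuous.measurable measurable_const
  have hT (k : ℕ) : MeasurableSet {x | 1 / 3 < φ k x} :=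
    measurableSet_lt measurable_const (φ k).continuous.measurable
  obtain ⟨u, hu, v, hv, hzero⟩ := exists_mem_iInf_liminf_eq_zero hμ.1 hν.1 hS hT
    ENNReal.tendsto_inv_nat_nhds_zero hle hμ₀ hν₀
  obtain ⟨Γ, _, hΓu, hΓv, hΓD⟩ := hcouple u hu v hv
  obtain ⟨δ, hδ, hδle⟩ := exists_pos_eventually_le_of_coupling hΓu hΓv hΓD
  refine hδ.not_ge (hzero ▸ le_iInf fun k => le_liminf_of_le (by isBoundedDefault) ?_)
  filter_upwards [hδle (φ k) (hφ k) (1 / 3) (2 / 3) (by norm_num)] with n hn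
  simp only [← map_eval_pathLaw_eq_pow hpathProb hpathFirst hpathMarkov]
  rwa [Measure.map_apply (measurable_pi_apply n) (hS k),
    Measure.map_apply (measurable_pi_apply n) (hT k)]

/-- Corollary 2.2: uniqueness of the ergodic invariant measure via asymptotic couplings
which contract in a possibly different distance `ρt` on `H`.  `𝒢_{ρ̃}` is the class of
bounded continuous functions which are Lipschitz with respect to `ρt`, `D_{ρ̃}` is the set
of pairs of sequences whose `ρt`-distance tends to `0`, and `pathLaw u₀` is `δ_{u₀}P^ℕ`. -/
theorem unique_ergodic_of_asymptotic_coupling_dist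
    {H : Type*} [MetricSpace H] [PolishSpace H] [MeasurableSpace H] [BorelSpace H]
    (P : ProbabilityTheory.Kernel H H) [IsMarkovKernel P]
    (pathLaw : H → Measure (ℕ → H))
    (hpathProb : ∀ u, IsProbabilityMeasure (pathLaw u))
    (hpathFirst : ∀ u, (pathLaw u).map (fun ω => ω 0) = P u)
    (hpathMarkov : ∀ u, (pathLaw u).map (fun ω k => ω (k + 1)) = (P u).bind pathLaw)
    (ρt : H → H → ℝ)
    (hρt_nonneg : ∀ u v, 0 ≤ ρt u v)
    (hρt_self : ∀ u, ρt u u = 0)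
    (hρt_symm : ∀ u v, ρt u v = ρt v u)
    (hρt_triangle : ∀ u v w, ρt u w ≤ ρt u v + ρt v w)
    (hdet : ∀ μ ν : Measure H, IsProbabilityMeasure μ → IsProbabilityMeasure ν →
      (∀ φ : H → ℝ, Continuous φ → (∃ C : ℝ, ∀ x, |φ x| ≤ C) →
        (∃ Lip : ℝ, ∀ u v, |φ u - φ v| ≤ Lip * ρt u v) →
        ∫ x, φ x ∂μ = ∫ x, φ x ∂ν) → μ = ν)
    (hDmeas : MeasurableSet {p : (ℕ → H) × (ℕ → H) |
      Tendsto (fun n => ρt (p.1 n) (p.2 n)) atTop (nhds 0)})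
    (H₀ : Set H) (hH₀ : MeasurableSet H₀)
    (hcouple : ∀ u₀ ∈ H₀, ∀ v₀ ∈ H₀,
      ∃ Γ : Measure ((ℕ → H) × (ℕ → H)), IsProbabilityMeasure Γ ∧
        Γ.map Prod.fst ≪ pathLaw u₀ ∧ Γ.map Prod.snd ≪ pathLaw v₀ ∧
        0 < Γ {p : (ℕ → H) × (ℕ → H) |
          Tendsto (fun n => ρt (p.1 n) (p.2 n)) atTop (nhds 0)}) :
    ∀ μ ν : Measure H, IsProbabilityMeasure μ → IsProbabilityMeasure ν →
      IsErgodicMeasure P μ → IsErgodicMeasure P ν →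
      0 < μ H₀ → 0 < ν H₀ → μ = ν := by
  intro μ ν _ _ hμ hν hμ₀ hν₀
  refine unique_ergodic_of_asymptotic_coupling_dist_general hpathProb hpathFirst hpathMarkov
    (separatesPoints_of_forall_integral_eq fun μ' ν' hμ' hν' h => hdet μ' ν' hμ' hν' ?_)
    (fun u hu v hv => let ⟨Γ, _, hΓ⟩ := hcouple u hu v hv; ⟨Γ, inferInstance, hΓ⟩)
    hμ hν hμ₀ hν₀
  exact fun φ hφ ⟨C, hC⟩ ⟨L, hL⟩ =>
    h (.ofNormedAddCommGroup φ hφ C hC) (mem_asymptoticAlgebra_of_lipschitz hL)
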